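/- Let D be an open subset of the half-plane {(z,ρ) ∈ ℝ² : ρ > 0}, let G : D → GL(2,ℂ) be twice continuously differentiable, and let Λ ⊂ ℂ be a nonempty open connected set. Suppose s : Λ × D → ℂ is continuous, holomorphic in λ ∈ Λ, C¹ in (z,ρ), and satisfies s(λ,z,ρ)² = (λ − ξ)(λ − ξ̄) with ξ = z + iρ, and define γ(λ,z,ρ) = (2/(ξ − ξ̄))(λ − (ξ + ξ̄)/2 + s(λ,z,ρ)); assume γ ≠ 1 and γ ≠ −1 on Λ × D and that λ ↦ γ(λ,z,ρ) is nonconstant for each (z,ρ). If for every λ ∈ Λ there exists a C¹ invertible matrix function Ψ_λ : D → GL(2,ℂ) satisfying the linear system ∂_ξΨ_λ = (G_ξ G⁻¹/(1 − γ))Ψ_λ and ∂_ξ̄Ψ_λ = (G_ξ̄ G⁻¹/(1 + γ))Ψ_λ on D, then G satisfies ∂_ρ(ρ G_ρ G⁻¹) + ∂_z(ρ G_z G⁻¹) = 0 on D. -/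

import Mathlib

open Complex Matrix

noncomputable section

/-- Entrywise partial derivative of a matrix-valued function with respect to `z`. -/
def matPz (F : ℝ × ℝ → Matrix (Fin 2) (Fin 2) ℂ) (p : ℝ × ℝ) :
    Matrix (Fin 2) (Fin 2) ℂ :=
  Matrix.of fun i j => deriv (fun t : ℝ => F (t, p.2) i j) p.1

/-- Entrywise partial derivative of a matrix-valued function with respect to `ρ`. -/
def matPr (F : ℝ × ℝ → Matrix (Fin 2) (Fin 2) ℂ) (p : ℝ × ℝ) :
    Matrix (Fin 2) (Fin 2) ℂ :=
  Matrix.of fun i j => deriv (fun t : ℝ => F (p.1, t) i j) p.2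

/-- `∂_ξ = ½(∂_z − i ∂_ρ)`, entrywise on matrix-valued functions. -/
def matDxi (F : ℝ × ℝ → Matrix (Fin 2) (Fin 2) ℂ) (p : ℝ × ℝ) :
    Matrix (Fin 2) (Fin 2) ℂ :=
  (2 : ℂ)⁻¹ • (matPz F p - Complex.I • matPr F p)

/-- `∂_ξ̄ = ½(∂_z + i ∂_ρ)`, entrywise on matrix-valued functions. -/
def matDxiBar (F : ℝ × ℝ → Matrix (Fin 2) (Fin 2) ℂ) (p : ℝ × ℝ) :
    Matrix (Fin 2) (Fin 2) ℂ :=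
  (2 : ℂ)⁻¹ • (matPz F p + Complex.I • matPr F p)

/-- `ξ = z + iρ`. -/
def xi (p : ℝ × ℝ) : ℂ := (p.1 : ℂ) + Complex.I * (p.2 : ℂ)

section core
variable {A : Type*} [NormedRing A] [NormedAlgebra ℂ A]

abbrev mkD {A : Type*} [NormedAddCommGroup A] [NormedSpace ℝ A] (x y : A) : ℝ × ℝ →L[ℝ] A :=
  (ContinuousLinearMap.fst ℝ ℝ ℝ).smulRight x + (ContinuousLinearMap.snd ℝ ℝ ℝ).smulRight y

theorem mkD_eq {A : Type*} [NormedAddCommGroup A] [NormedSpace ℝ A] (L : ℝ × ℝ →L[ℝ] A) :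
    L = mkD (L (1,0)) (L (0,1)) := by
  ext <;> simp

theorem hasF_gen {A : Type*} [NormedAddCommGroup A] [NormedSpace ℝ A]
    {f : ℝ × ℝ → A} {p : ℝ × ℝ} (h : DifferentiableAt ℝ f p) :
    HasFDerivAt f (mkD (fderiv ℝ f p (1,0)) (fderiv ℝ f p (0,1))) p := by
  rw [← mkD_eq]
  exact h.hasFDerivAt

theorem sym_lem {A : Type*} [NormedAddCommGroup A] [NormedSpace ℝ A]
    {f P Q : ℝ × ℝ → A} {p : ℝ × ℝ}
    (h : ∀ᶠ y in nhds p, HasFDerivAt f (mkD (P y) (Q y)) y)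
    {P' Q' : ℝ × ℝ →L[ℝ] A} (hP : HasFDerivAt P P' p) (hQ : HasFDerivAt Q Q' p) :
    P' (0,1) = Q' (1,0) := by
  have h1 : HasFDerivAt (fun y => mkD (P y) (Q y))
      (((ContinuousLinearMap.smulRightL ℝ (ℝ × ℝ) A (ContinuousLinearMap.fst ℝ ℝ ℝ)).comp P') +
      ((ContinuousLinearMap.smulRightL ℝ (ℝ × ℝ) A (ContinuousLinearMap.snd ℝ ℝ ℝ)).comp Q')) p := by
    exact (((ContinuousLinearMap.smulRightL ℝ (ℝ × ℝ) A (ContinuousLinearMap.fst ℝ ℝ ℝ)).hasFDerivAt).comp p hP).add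
      (((ContinuousLinearMap.smulRightL ℝ (ℝ × ℝ) A (ContinuousLinearMap.snd ℝ ℝ ℝ)).hasFDerivAt).comp p hQ)
  have := second_derivative_symmetric_of_eventually h h1 (0,1) (1,0)
  simpa using this

/-- derivative of `K * G⁻¹`. -/
theorem mul_inv_deriv [CompleteSpace A] {K G : ℝ × ℝ → A} {p : ℝ × ℝ} {K' G' : ℝ × ℝ →L[ℝ] A}
    (hK : HasFDerivAt K K' p) (hG : HasFDerivAt G G' p) (hu : IsUnit (G p)) :
    ∃ X' : ℝ × ℝ →L[ℝ] A, HasFDerivAt (fun q => K q * Ring.inverse (G q)) X' p ∧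
      ∀ v, X' v = K' v * Ring.inverse (G p)
        - (K p * Ring.inverse (G p)) * (G' v * Ring.inverse (G p)) := by
  obtain ⟨u, hu⟩ := hu
  have h1 := hasFDerivAt_ringInverse (𝕜 := ℝ) u
  rw [hu] at h1
  have h2 := hK.mul' (h1.comp p hG)
  refine ⟨_, h2, fun v => ?_⟩
  simp [← hu, mul_assoc, sub_eq_neg_add]

theorem alg_lem {A : Type*} [Ring A] [Algebra ℂ A] {X Y Ψ W X10 X01 Y10 Y01 : A}
    {a b az ar bz br r : ℂ} (hΨ : IsUnit Ψ)
    (hX01 : X01 = W - X * Y) (hY10 : Y10 = W - Y * X)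
    (hsym : (a • X - b • Y) * ((b • X + a • Y) * Ψ) +
      (a • X01 + ar • X - (b • Y01 + br • Y)) * Ψ =
      (b • X + a • Y) * ((a • X - b • Y) * Ψ) +
      (b • X10 + bz • X + (a • Y10 + az • Y)) * Ψ)
    (h1 : ar = bz) (h2 : r * (br + az) = b) (hab : a ^ 2 + b ^ 2 = a) (hb : b ≠ 0) :
    r • Y01 + Y + r • X10 = 0 := by
  rw [← mul_assoc, ← mul_assoc, ← add_mul, ← add_mul] at hsym
  have h := hΨ.mul_right_cancel hsym
  subst hX01 hY10 h1
  have h3 : b • (X10 + Y01) + (br + az) • Y = (a ^ 2 + b ^ 2 - a) • (X * Y - Y * X) := by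
    simp only [sub_mul, mul_sub, add_mul, mul_add, smul_mul_assoc, mul_smul_comm, smul_smul] at h
    linear_combination (norm := module) (-1 : ℂ) • h
  have h4 : b • (r • Y01 + Y + r • X10) = 0 := by
    rw [hab, sub_self, zero_smul] at h3
    have h5 : r • (b • (X10 + Y01) + (br + az) • Y) = 0 := by rw [h3, smul_zero]
    rw [smul_add, smul_smul r (br + az), h2] at h5
    rw [← h5]
    module
  exact (smul_eq_zero_iff_right hb).1 h4

theorem core [CompleteSpace A] {p : ℝ × ℝ} {G Gz Gr Ψ : ℝ × ℝ → A} {α β : ℝ × ℝ → ℂ}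
    (hG : ∀ᶠ q in nhds p, HasFDerivAt G (mkD (Gz q) (Gr q)) q)
    (hGz : DifferentiableAt ℝ Gz p) (hGr : DifferentiableAt ℝ Gr p)
    (hu : IsUnit (G p)) (hΨu : IsUnit (Ψ p))
    (hΨ : ∀ᶠ q in nhds p, HasFDerivAt Ψ
      (mkD ((α q • (Gz q * Ring.inverse (G q)) - β q • (Gr q * Ring.inverse (G q))) * Ψ q)
        ((β q • (Gz q * Ring.inverse (G q)) + α q • (Gr q * Ring.inverse (G q))) * Ψ q)) q)
    {α' β' : ℝ × ℝ →L[ℝ] ℂ} (hα : HasFDerivAt α α' p) (hβ : HasFDerivAt β β' p)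
    (h1 : α' (0,1) = β' (1,0)) (h2 : (p.2 : ℂ) * (β' (0,1) + α' (1,0)) = β p)
    (hab : α p ^ 2 + β p ^ 2 = α p) (hb : β p ≠ 0) :
    DifferentiableAt ℝ (fun q : ℝ × ℝ => (q.2 : ℂ) • (Gr q * Ring.inverse (G q))) p ∧
    DifferentiableAt ℝ (fun q : ℝ × ℝ => (q.2 : ℂ) • (Gz q * Ring.inverse (G q))) p ∧
    fderiv ℝ (fun q : ℝ × ℝ => (q.2 : ℂ) • (Gr q * Ring.inverse (G q))) p (0,1) +
    fderiv ℝ (fun q : ℝ × ℝ => (q.2 : ℂ) • (Gz q * Ring.inverse (G q))) p (1,0) = 0 := by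
  have hs := sym_lem hG hGz.hasFDerivAt hGr.hasFDerivAt
  obtain ⟨X', hX, hX'⟩ := mul_inv_deriv hGz.hasFDerivAt hG.self_of_nhds hu
  obtain ⟨Y', hY, hY'⟩ := mul_inv_deriv hGr.hasFDerivAt hG.self_of_nhds hu
  have hρ : HasFDerivAt (fun q : ℝ × ℝ => (q.2 : ℂ))
      (Complex.ofRealCLM.comp (ContinuousLinearMap.snd ℝ ℝ ℝ)) p :=
    (Complex.ofRealCLM.comp (ContinuousLinearMap.snd ℝ ℝ ℝ)).hasFDerivAt
  have hY2 := hρ.smul hY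
  have hX2 := hρ.smul hX
  have hΨp := hΨ.self_of_nhds
  have hM := ((hα.smul hX).sub (hβ.smul hY)).mul' hΨp
  have hN := ((hβ.smul hX).add (hα.smul hY)).mul' hΨp
  have hsym := sym_lem hΨ hM hN
  refine ⟨hY2.differentiableAt, hX2.differentiableAt, ?_⟩
  have e1 : fderiv ℝ (fun q : ℝ × ℝ => (q.2 : ℂ) • (Gr q * Ring.inverse (G q))) p = _ := hY2.fderiv
  have e2 : fderiv ℝ (fun q : ℝ × ℝ => (q.2 : ℂ) • (Gz q * Ring.inverse (G q))) p = _ := hX2.fderiv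
  rw [e1, e2]
  have hX10 := hX' (1,0)
  have hX01 := hX' (0,1)
  have hY10 := hY' (1,0)
  have hY01 := hY' (0,1)
  rw [hs] at hX01
  have hsym' := hsym
  simp only [_root_.add_apply, _root_.smul_apply,
    _root_.sub_apply, ContinuousLinearMap.smulRight_apply, Pi.sub_apply, Pi.add_apply,
    Pi.smul_apply', ContinuousLinearMap.coe_fst', ContinuousLinearMap.coe_snd', zero_smul, one_smul,
    zero_add, add_zero, smul_eq_mul, MulOpposite.smul_eq_mul_unop, MulOpposite.unop_op]
    at hsym' hX10 hX01 hY10 hY01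
  have key := alg_lem (r := (p.2 : ℂ)) hΨu hX01 hY10 hsym' h1 h2 hab hb
  simpa using key

end core

section scalars

theorem alg_mat {A : Type*} [Ring A] [Algebra ℂ A] {P R gz gr h Ψ : A} {a b α β : ℂ}
    (ha : a = α - I * β) (hb : b = α + I * β)
    (h1 : (2 : ℂ)⁻¹ • (P - I • R) = (a • (((2 : ℂ)⁻¹ • (gz - I • gr)) * h)) * Ψ)
    (h2 : (2 : ℂ)⁻¹ • (P + I • R) = (b • (((2 : ℂ)⁻¹ • (gz + I • gr)) * h)) * Ψ) :
    P = (α • (gz * h) - β • (gr * h)) * Ψ ∧ R = (β • (gz * h) + α • (gr * h)) * Ψ := by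
  subst ha hb
  have hI : I * I = -1 := I_mul_I
  simp only [sub_mul, add_mul, smul_mul_assoc, smul_sub, smul_add, smul_smul] at h1 h2 ⊢
  constructor
  · linear_combination (norm := module) (1 : ℂ) • h1 + (1 : ℂ) • h2 + hI • (β • (gr * h * Ψ))
  · linear_combination (norm := module) I • h1 - I • h2 + hI • (R - β • (gz * h * Ψ) - α • (gr * h * Ψ))

theorem xi_sub (p : ℝ × ℝ) : xi p - star (xi p) = 2 * (I * p.2) := by
  simp [xi]; ring
theorem xi_add (p : ℝ × ℝ) : xi p + star (xi p) = 2 * p.1 := by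
  simp [xi]; ring
theorem xi_mul (l : ℂ) (p : ℝ × ℝ) : (l - xi p) * (l - star (xi p)) = (l - p.1) ^ 2 + p.2 ^ 2 := by
  have hI : I * I = -1 := I_mul_I
  simp [xi]; linear_combination (-p.2 ^ 2 : ℂ) * hI

theorem gam_lem {g s u r : ℂ} (hr : r ≠ 0) (hs : s ^ 2 = u ^ 2 + r ^ 2)
    (hg : I * r * g = u + s) (h1 : g ≠ 1) (h2 : g ≠ -1) :
    s ≠ 0 ∧ (1 - g)⁻¹ = (s - u) / (2 * s) - I * (r / (2 * s)) ∧
      (1 + g)⁻¹ = (s - u) / (2 * s) + I * (r / (2 * s)) := by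
  have hI : I * I = -1 := I_mul_I
  have hI2 : I ^ 2 = -1 := I_sq
  have hg' : g = (u + s) / (I * r) := by
    rw [eq_div_iff (mul_ne_zero I_ne_zero hr), ← hg]; ring
  have h1' : 1 - g ≠ 0 := sub_ne_zero.2 h1.symm
  have h2' : 1 + g ≠ 0 := fun h => h2 (by linear_combination h)
  have hs0 : s ≠ 0 := by
    rintro rfl
    have : r ^ 2 * ((1 - g) * (1 + g)) = 0 := by
      linear_combination (-1 : ℂ) * hs + (I * r * g + u) * hg - r ^ 2 * g ^ 2 * hI2
    exact mul_ne_zero (pow_ne_zero 2 hr) (mul_ne_zero h1' h2') this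
  refine ⟨hs0, ?_, ?_⟩
  · rw [inv_eq_iff_eq_inv, eq_comm, inv_eq_iff_eq_inv, eq_comm]
    rw [inv_eq_one_div, div_eq_iff h1']
    have : I * r * (s * 2) = I * r * ((s - u - I * r) * (1 - g)) := by
      linear_combination hs + (s - u - I * r) * hg + r ^ 2 * hI2
    have := mul_left_cancel₀ (mul_ne_zero I_ne_zero hr) this
    field_simp
    linear_combination this
  · rw [inv_eq_one_div, div_eq_iff h2']
    have : I * r * (s * 2) = I * r * ((s - u + I * r) * (1 + g)) := by
      linear_combination (-1 : ℂ) * hs - (s - u + I * r) * hg - r ^ 2 * hI2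
    have := mul_left_cancel₀ (mul_ne_zero I_ne_zero hr) this
    field_simp
    linear_combination this

theorem ab_lem {s : ℝ × ℝ → ℂ} {l : ℂ} {p : ℝ × ℝ} (hd : DifferentiableAt ℝ s p)
    (hs : ∀ᶠ q in nhds p, s q ^ 2 = (l - q.1) ^ 2 + (q.2 : ℂ) ^ 2) (hs0 : s p ≠ 0) :
    ∃ α' β' : ℝ × ℝ →L[ℝ] ℂ,
      HasFDerivAt (fun q : ℝ × ℝ => (s q - (l - q.1)) / (2 * s q)) α' p ∧
      HasFDerivAt (fun q : ℝ × ℝ => (q.2 : ℂ) / (2 * s q)) β' p ∧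
      α' (0,1) = β' (1,0) ∧ (p.2 : ℂ) * (β' (0,1) + α' (1,0)) = (p.2 : ℂ) / (2 * s p) := by
  have hρ : HasFDerivAt (fun q : ℝ × ℝ => (q.2 : ℂ))
      (Complex.ofRealCLM.comp (ContinuousLinearMap.snd ℝ ℝ ℝ)) p :=
    (Complex.ofRealCLM.comp (ContinuousLinearMap.snd ℝ ℝ ℝ)).hasFDerivAt
  have hz : HasFDerivAt (fun q : ℝ × ℝ => (q.1 : ℂ))
      (Complex.ofRealCLM.comp (ContinuousLinearMap.fst ℝ ℝ ℝ)) p :=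
    (Complex.ofRealCLM.comp (ContinuousLinearMap.fst ℝ ℝ ℝ)).hasFDerivAt
  have hS := hd.hasFDerivAt
  set S := fderiv ℝ s p
  have e1 := (hS.mul hS)
  have hu := hz.const_sub l
  have e2 := ((hu.mul hu).add (hρ.mul hρ))
  have e3 := e1.unique (e2.congr_of_eventuallyEq (by
    filter_upwards [hs] with q hq
    simp [← pow_two, hq]))
  have hp := hs.self_of_nhds
  have ez := congrArg (fun L => L (1,0)) e3
  have er := congrArg (fun L => L (0,1)) e3
  simp at ez er
  have ez' : s p * S (1,0) = -(l - p.1) := by linear_combination ez / 2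
  have er' : s p * S (0,1) = p.2 := by linear_combination er / 2
  have ez2 : S (1,0) = -(l - p.1) / s p := by rw [eq_div_iff hs0, ← ez']; ring
  have er2 : S (0,1) = p.2 / s p := by rw [eq_div_iff hs0, ← er']; ring
  have h2s := hS.const_mul (2 : ℂ)
  have hinv := (hasFDerivAt_inv' (𝕜 := ℝ) (mul_ne_zero two_ne_zero hs0)).comp p h2s
  have ha := (hS.sub hu).mul hinv
  have hb := hρ.mul hinv
  refine ⟨_, _, ha, hb, ?_, ?_⟩
  · simp [ez2, er2]
    field_simp
    ring
  · simp [ez2, er2]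
    field_simp
    linear_combination (p.2 : ℂ) * hp
end scalars

section bridge
abbrev M2 := Matrix (Fin 2) (Fin 2) ℂ

attribute [local instance] Matrix.linftyOpNormedRing

/-- Normed algebra structure over the complex numbers only. -/
@[reducible] def algM2 : NormedAlgebra ℂ M2 := Matrix.linftyOpNormedAlgebra

attribute [local instance] algM2

def entryC (i j : Fin 2) : M2 →L[ℝ] ℂ :=
  (LinearMap.toContinuousLinearMap (Matrix.entryLinearMap ℂ ℂ i j)).restrictScalars ℝ

theorem entryC_apply (i j : Fin 2) (M : M2) : entryC i j M = M i j := rfl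

def singleC (i j : Fin 2) : ℂ →L[ℝ] M2 :=
  (LinearMap.toContinuousLinearMap (Matrix.singleLinearMap ℂ i j)).restrictScalars ℝ

theorem contDiffOn_mat {F : ℝ × ℝ → M2} {D : Set (ℝ × ℝ)} {n : WithTop ℕ∞}
    (h : ∀ i j, ContDiffOn ℝ n (fun p => F p i j) D) : ContDiffOn ℝ n F D := by
  have : F = fun p => ∑ i, ∑ j, singleC i j (F p i j) := by
    funext p
    exact Matrix.matrix_eq_sum_single (F p)
  rw [this]
  refine ContDiffOn.sum fun i _ => ContDiffOn.sum fun j _ => ?_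
  exact (singleC i j).contDiff.comp_contDiffOn (h i j)

theorem matPz_eq {F : ℝ × ℝ → M2} {p : ℝ × ℝ} (h : DifferentiableAt ℝ F p) :
    matPz F p = fderiv ℝ F p (1, 0) := by
  ext i j
  have h1 : HasDerivAt (fun t : ℝ => (t, p.2)) ((1 : ℝ), (0 : ℝ)) p.1 :=
    (hasDerivAt_id p.1).prodMk (hasDerivAt_const _ _)
  have h2 := (entryC i j).hasFDerivAt.comp_hasDerivAt p.1
    (HasFDerivAt.comp_hasDerivAt p.1 (f := fun t : ℝ => (t, p.2)) h.hasFDerivAt h1)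
  exact h2.deriv

theorem matPr_eq {F : ℝ × ℝ → M2} {p : ℝ × ℝ} (h : DifferentiableAt ℝ F p) :
    matPr F p = fderiv ℝ F p (0, 1) := by
  ext i j
  have h1 : HasDerivAt (fun t : ℝ => (p.1, t)) ((0 : ℝ), (1 : ℝ)) p.2 :=
    (hasDerivAt_const _ _).prodMk (hasDerivAt_id p.2)
  have h2 := (entryC i j).hasFDerivAt.comp_hasDerivAt p.2
    (HasFDerivAt.comp_hasDerivAt p.2 (f := fun t : ℝ => (p.1, t)) h.hasFDerivAt h1)
  exact h2.deriv

theorem hasF_mat {F : ℝ × ℝ → M2} {p : ℝ × ℝ} (h : DifferentiableAt ℝ F p) :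
    HasFDerivAt F (mkD (matPz F p) (matPr F p)) p := by
  rw [matPz_eq h, matPr_eq h]
  exact hasF_gen h

theorem main_aux
    (D : Set (ℝ × ℝ)) (hD : IsOpen D) (hDhalf : ∀ p ∈ D, 0 < p.2)
    (G Ψ : ℝ × ℝ → M2)
    (hGsmooth : ∀ i j, ContDiffOn ℝ 2 (fun p => G p i j) D)
    (hGinv : ∀ p ∈ D, IsUnit (G p))
    (l : ℂ) (s g : ℝ × ℝ → ℂ)
    (hsC1 : ContDiffOn ℝ 1 s D)
    (hssq : ∀ p ∈ D, (s p) ^ 2 = (l - xi p) * (l - star (xi p)))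
    (hγ : ∀ p, g p = (2 / (xi p - star (xi p))) * (l - (xi p + star (xi p)) / 2 + s p))
    (hγne : ∀ p ∈ D, g p ≠ 1 ∧ g p ≠ -1)
    (hΨ1 : ∀ i j, ContDiffOn ℝ 1 (fun p => Ψ p i j) D)
    (hΨ2 : ∀ p ∈ D, IsUnit (Ψ p))
    (hΨ3 : ∀ p ∈ D, matDxi Ψ p = ((1 - g p)⁻¹ • (matDxi G p * (G p)⁻¹)) * Ψ p)
    (hΨ4 : ∀ p ∈ D, matDxiBar Ψ p = ((1 + g p)⁻¹ • (matDxiBar G p * (G p)⁻¹)) * Ψ p) :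
    ∀ p ∈ D,
      matPr (fun q => (q.2 : ℂ) • (matPr G q * (G q)⁻¹)) p +
        matPz (fun q => (q.2 : ℂ) • (matPz G q * (G q)⁻¹)) p = 0 := by
  intro p hp
  have hDn : D ∈ nhds p := hD.mem_nhds hp
  have hGc := contDiffOn_mat hGsmooth
  have hΨc := contDiffOn_mat hΨ1
  have hGd : ∀ q ∈ D, DifferentiableAt ℝ G q := fun q hq =>
    (hGc.contDiffAt (hD.mem_nhds hq)).differentiableAt (by norm_num)
  have hΨd : ∀ q ∈ D, DifferentiableAt ℝ Ψ q := fun q hq =>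
    (hΨc.contDiffAt (hD.mem_nhds hq)).differentiableAt (by norm_num)
  have hG' : DifferentiableAt ℝ (fderiv ℝ G) p :=
    ((hGc.contDiffAt hDn).fderiv_right (m := 1) (by norm_num)).differentiableAt (by norm_num)
  have hGz : DifferentiableAt ℝ (matPz G) p := by
    refine (hG'.clm_apply (differentiableAt_const ((1 : ℝ), (0 : ℝ)))).congr_of_eventuallyEq ?_
    filter_upwards [hDn] with q hq using matPz_eq (hGd q hq)
  have hGr : DifferentiableAt ℝ (matPr G) p := by
    refine (hG'.clm_apply (differentiableAt_const ((0 : ℝ), (1 : ℝ)))).congr_of_eventuallyEq ?_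
    filter_upwards [hDn] with q hq using matPr_eq (hGd q hq)
  have hsq : ∀ q ∈ D, s q ^ 2 = (l - q.1) ^ 2 + (q.2 : ℂ) ^ 2 := fun q hq => by
    rw [hssq q hq, xi_mul]
  have hr0 : ∀ q ∈ D, (q.2 : ℂ) ≠ 0 := fun q hq => by
    exact_mod_cast (hDhalf q hq).ne'
  have hgam : ∀ q ∈ D, _ := fun q hq => gam_lem (g := g q) (u := l - q.1) (hr0 q hq) (hsq q hq)
    (by
      have := hr0 q hq
      rw [hγ q, xi_sub, xi_add]
      field_simp [I_ne_zero]) (hγne q hq).1 (hγne q hq).2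
  have hs0 := (hgam p hp).1
  obtain ⟨α', β', hα, hβ, h1, h2⟩ := ab_lem (l := l)
    ((hsC1.contDiffAt hDn).differentiableAt (by norm_num))
    (by filter_upwards [hDn] with q hq using hsq q hq) hs0
  have key := core (G := G) (Gz := matPz G) (Gr := matPr G) (Ψ := Ψ) (p := p)
    (by filter_upwards [hDn] with q hq using hasF_mat (hGd q hq)) hGz hGr (hGinv p hp) (hΨ2 p hp)
    (by
      filter_upwards [hDn] with q hq
      have h := hasF_mat (hΨd q hq)
      obtain ⟨_, ha, hb⟩ := hgam q hq
      obtain ⟨e1, e2⟩ := alg_mat ha hb (hΨ3 q hq) (hΨ4 q hq)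
      rw [e1, e2, Matrix.nonsing_inv_eq_ringInverse] at h
      exact h) hα hβ h1 h2
    (by
      have := hsq p hp
      field_simp
      linear_combination (-1 : ℂ) * this)
    (div_ne_zero (hr0 p hp) (mul_ne_zero two_ne_zero hs0))
  simp only [Matrix.nonsing_inv_eq_ringInverse]
  rw [matPr_eq key.1, matPz_eq key.2.1]
  exact key.2.2
end bridge

theorem linear_system_implies_ernst_matrix_equation
    (D : Set (ℝ × ℝ)) (hD : IsOpen D) (hDhalf : ∀ p ∈ D, 0 < p.2)
    (G : ℝ × ℝ → Matrix (Fin 2) (Fin 2) ℂ)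
    (hGsmooth : ∀ i j, ContDiffOn ℝ 2 (fun p => G p i j) D)
    (hGinv : ∀ p ∈ D, IsUnit (G p))
    (Λ : Set ℂ) (hΛopen : IsOpen Λ) (hΛne : Λ.Nonempty) (hΛconn : IsConnected Λ)
    (s : ℂ → ℝ × ℝ → ℂ)
    (hscont : ContinuousOn (fun q : ℂ × (ℝ × ℝ) => s q.1 q.2) (Λ ×ˢ D))
    (hshol : ∀ p ∈ D, DifferentiableOn ℂ (fun l => s l p) Λ)
    (hsC1 : ∀ l ∈ Λ, ContDiffOn ℝ 1 (s l) D)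
    (hssq : ∀ l ∈ Λ, ∀ p ∈ D,
      (s l p) ^ 2 = (l - xi p) * (l - star (xi p)))
    (γ : ℂ → ℝ × ℝ → ℂ)
    (hγ : ∀ l p, γ l p =
      (2 / (xi p - star (xi p))) * (l - (xi p + star (xi p)) / 2 + s l p))
    (hγne : ∀ l ∈ Λ, ∀ p ∈ D, γ l p ≠ 1 ∧ γ l p ≠ -1)
    (hγnonconst : ∀ p ∈ D, ∃ l₁ ∈ Λ, ∃ l₂ ∈ Λ, γ l₁ p ≠ γ l₂ p)
    (hΨ : ∀ l ∈ Λ, ∃ Ψ : ℝ × ℝ → Matrix (Fin 2) (Fin 2) ℂ,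
      (∀ i j, ContDiffOn ℝ 1 (fun p => Ψ p i j) D) ∧
      (∀ p ∈ D, IsUnit (Ψ p)) ∧
      (∀ p ∈ D, matDxi Ψ p =
        ((1 - γ l p)⁻¹ • (matDxi G p * (G p)⁻¹)) * Ψ p) ∧
      (∀ p ∈ D, matDxiBar Ψ p =
        ((1 + γ l p)⁻¹ • (matDxiBar G p * (G p)⁻¹)) * Ψ p)) :
    ∀ p ∈ D,
      matPr (fun q => (q.2 : ℂ) • (matPr G q * (G q)⁻¹)) p +
        matPz (fun q => (q.2 : ℂ) • (matPz G q * (G q)⁻¹)) p = 0 := by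
  obtain ⟨l, hl⟩ := hΛne
  obtain ⟨Ψ, h1, h2, h3, h4⟩ := hΨ l hl
  exact main_aux D hD hDhalf G Ψ hGsmooth hGinv l (s l) (γ l) (hsC1 l hl) (hssq l hl) (hγ l)
    (hγne l hl) h1 h2 h3 h4
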